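/- Let m > n ≥ 3 and let f_1,…,f_m : [n] → [n] be functions such that (f_1(x_1),…,f_m(x_m)) ∈ Surj_{m,n} for every (x_1,…,x_m) ∈ Surj_{m,n}. If it is not the case that for every j ∈ [n] some f_i is the constant j function, then no f_i is constant (equivalently, with C = {j ∈ [n] : f_i ≡ j for some i}, the assumption |C| ≤ n − 1 implies C = ∅). -/

import Mathlib

lemma arith_aux (m n k s b : ℕ) (hn : 3 ≤ n) (hmn : n < m) (hk : 1 ≤ k) (hkb : k ≤ b) (hbs : b < s)
    (hsn : s < n) : (m - k) * n + 1 ≤ (n - k) * ((m - b) * s) := by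
  have h1 : (n - k) * ((m + 1 - s) * s) ≤ (n - k) * ((m - b) * s) := by
    exact Nat.mul_le_mul_left _ (Nat.mul_le_mul_right _ (by omega))
  refine le_trans ?_ h1
  obtain ⟨t, rfl⟩ : ∃ t, n = k + t := ⟨n - k, by omega⟩
  obtain ⟨d, rfl⟩ : ∃ d, m = k + t + d := ⟨m - (k + t), by omega⟩
  have e1 : k + t + d - k = t + d := by omega
  have e2 : k + t - k = t := by omega
  obtain ⟨r, hr⟩ : ∃ r, k + t + d + 1 = s + r := ⟨k + t + d + 1 - s, by omega⟩
  have e3 : k + t + d + 1 - s = r := by omega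
  rw [e1, e2, e3]
  have ht : 2 ≤ t := by omega
  have hd : 1 ≤ d := by omega
  zify at *
  have hr' : (r : ℤ) = k + t + d + 1 - s := by linarith
  by_cases hs : (s : ℤ) ≤ t + d
  · have h2 : ((k : ℤ) + 1) * (t + d) ≤ r * s := by
      rw [hr']
      nlinarith [mul_nonneg (show (0 : ℤ) ≤ s - k - 1 by linarith) (show (0 : ℤ) ≤ t + d - s by linarith)]
    have h3 : (k : ℤ) + t + 1 ≤ t * (k + 1) := by nlinarith
    have h4 := mul_le_mul_of_nonneg_left h2 (show (0 : ℤ) ≤ t by linarith)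
    have h5 := mul_le_mul_of_nonneg_right h3 (show (0 : ℤ) ≤ t + d by linarith)
    nlinarith
  · have h2 : ((k : ℤ) + t - 1) * (d + 2) ≤ r * s := by
      rw [hr']
      nlinarith [mul_nonneg (show (0 : ℤ) ≤ k + t - 1 - s by linarith) (show (0 : ℤ) ≤ s - (d + 2) by linarith)]
    have h3 : 2 * ((t : ℤ) + d) ≤ t * (d + 2) := by nlinarith
    have h4 := mul_le_mul_of_nonneg_left h2 (show (0 : ℤ) ≤ t by linarith)
    have h5 := mul_le_mul_of_nonneg_right h3 (show (0 : ℤ) ≤ (k : ℤ) + t - 1 by linarith)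
    have h6 : ((t : ℤ) + d) * (k + t) + 1 ≤ 2 * (t + d) * (k + t - 1) := by nlinarith
    nlinarith

lemma hall_aux (m n : ℕ) (f : Fin m → Fin n → Fin n)
    (hpoly : ∀ x : Fin m → Fin n, Function.Surjective x →
      Function.Surjective (fun i => f i (x i))) (j : Fin n)
    (hj : ∀ i, ∃ s, f i s ≠ j) :
    ∃ S : Finset (Fin n), (S.biUnion (fun s => Finset.univ.filter (fun i => f i s ≠ j))).card
      < S.card := by
  by_contra hcon
  push Not at hcon
  obtain ⟨g, hg, hgm⟩ := (Finset.all_card_le_biUnion_card_iff_exists_injective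
    (fun s => Finset.univ.filter (fun i => f i s ≠ j))).1 hcon
  classical
  choose b hb using hj
  have key : ∀ i, ∃ s, f i s ≠ j ∧ ∀ s', g s' = i → s = s' := by
    intro i
    by_cases h : ∃ s, g s = i
    · obtain ⟨s, rfl⟩ := h
      refine ⟨s, by simpa using hgm s, fun s' h => (hg h).symm⟩
    · exact ⟨b i, hb i, fun s' h' => absurd ⟨s', h'⟩ h⟩
  choose x hx hx' using key
  obtain ⟨i, hi⟩ := hpoly x (fun s => ⟨g s, hx' _ s rfl⟩) j
  exact hx i hi

/-- for an arity-1 polymorphism of `Surj_{m,n}` with `m > n ≥ 3`, if not every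
category is represented by a constant function among the `f_i`, then no `f_i` is constant. -/
theorem stmt7 (m n : ℕ) (hn : 3 ≤ n) (hmn : n < m)
    (f : Fin m → Fin n → Fin n)
    (hpoly : ∀ x : Fin m → Fin n, Function.Surjective x →
      Function.Surjective (fun i => f i (x i)))
    (hnotcert : ¬ ∀ j : Fin n, ∃ i : Fin m, ∀ s : Fin n, f i s = j) :
    ∀ i : Fin m, ¬ ∃ c : Fin n, ∀ s : Fin n, f i s = c := by
  classical
  intro i0 hi0
  set K : Finset (Fin m) := Finset.univ.filter (fun i => ∃ c : Fin n, ∀ s : Fin n, f i s = c) with hK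
  set D : Finset (Fin n) := Finset.univ.filter (fun j => ¬ ∃ i : Fin m, ∀ s : Fin n, f i s = j) with hD
  let P : Fin n → Finset (Fin m × Fin n) := fun j => Finset.univ.filter (fun p => f p.1 p.2 = j)
  have hk1 : 1 ≤ K.card := Finset.card_pos.2 ⟨i0, by simpa [hK] using hi0⟩
  let z : Fin n := ⟨0, by omega⟩
  have hDc : Dᶜ.card ≤ K.card := by
    have : Dᶜ ⊆ K.image (fun i => f i z) := by
      intro j hj
      simp only [hD, Finset.mem_compl, Finset.mem_filter, Finset.mem_univ, true_and, not_not] at hj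
      obtain ⟨i, hi⟩ := hj
      exact Finset.mem_image.2 ⟨i, by simp only [hK, Finset.mem_filter, Finset.mem_univ, true_and]; exact ⟨j, hi⟩, hi z⟩
    exact (Finset.card_le_card this).trans Finset.card_image_le
  have hDn : n - K.card ≤ D.card := by
    rw [Finset.card_compl, Fintype.card_fin] at hDc
    omega
  have hP : ∀ j ∈ D, K.card < n ∧ (m - K.card) * n + 1 ≤ (n - K.card) * (P j).card := by
    intro j hj
    simp only [hD, Finset.mem_filter, Finset.mem_univ, true_and] at hj
    push Not at hj
    obtain ⟨S, hS⟩ := hall_aux m n f hpoly j hj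
    set B := S.biUnion (fun s => Finset.univ.filter (fun i => f i s ≠ j)) with hB
    have hmemB : ∀ i, i ∈ B ↔ ∃ s ∈ S, f i s ≠ j := by intro i; simp [hB]
    have hKB : K ⊆ B := by
      intro i hi
      simp only [hK, Finset.mem_filter, Finset.mem_univ, true_and] at hi
      obtain ⟨c, hc⟩ := hi
      obtain ⟨s, hs⟩ := Finset.card_pos.1 (lt_of_le_of_lt (Nat.zero_le _) hS)
      obtain ⟨s', hs'⟩ := hj i
      exact (hmemB i).2 ⟨s, hs, by rw [hc s, ← hc s']; exact hs'⟩
    have hSn : S.card < n := by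
      have h1 : S.card ≤ n := by simpa using Finset.card_le_univ S
      rcases h1.lt_or_eq with h | h
      · exact h
      · have hSu : S = Finset.univ := (Finset.card_eq_iff_eq_univ S).1 (by simpa using h)
        have hBu : B = Finset.univ := by
          ext i
          obtain ⟨s', hs'⟩ := hj i
          simp only [Finset.mem_univ, iff_true]
          exact (hmemB i).2 ⟨s', by rw [hSu]; simp, hs'⟩
        rw [hBu, Finset.card_univ, Fintype.card_fin] at hS
        omega
    have hkb := Finset.card_le_card hKB
    refine ⟨by omega, (arith_aux m n K.card S.card B.card hn hmn hk1 hkb hS hSn).trans ?_⟩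
    gcongr
    have : Bᶜ ×ˢ S ⊆ P j := by
      rintro ⟨i, s⟩ h
      simp only [Finset.mem_product, Finset.mem_compl, hmemB] at h
      push Not at h
      simpa [P] using h.1 s h.2
    have := Finset.card_le_card this
    rwa [Finset.card_product, Finset.card_compl, Fintype.card_fin] at this
  have hsum : ∑ j ∈ D, (P j).card ≤ (m - K.card) * n := by
    rw [← Finset.card_biUnion]
    · have : D.biUnion P ⊆ Kᶜ ×ˢ Finset.univ := by
        rintro ⟨i, s⟩ h
        simp only [Finset.mem_biUnion, hD, P, Finset.mem_filter, Finset.mem_univ, true_and] at h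
        obtain ⟨j, hj, hij⟩ := h
        simp only [Finset.mem_product, Finset.mem_compl, Finset.mem_univ, and_true, hK, Finset.mem_filter, true_and]
        rintro ⟨c, hc⟩
        exact hj ⟨i, fun s' => by rw [hc s', ← hc s, hij]⟩
      have := Finset.card_le_card this
      rwa [Finset.card_product, Finset.card_compl, Fintype.card_fin, Finset.card_univ, Fintype.card_fin] at this
    · intro a _ b _ hab
      rw [Function.onFun, Finset.disjoint_left]
      rintro p h1 h2
      simp only [P, Finset.mem_filter, Finset.mem_univ, true_and] at h1 h2
      exact hab (h1.symm.trans h2)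
  push Not at hnotcert
  obtain ⟨j0, hj0⟩ := hnotcert
  have hkn := (hP j0 (by simpa [hD] using hj0)).1
  have h1 : D.card * ((m - K.card) * n + 1) ≤ (n - K.card) * ∑ j ∈ D, (P j).card := by
    rw [Finset.mul_sum, ← smul_eq_mul]
    exact Finset.card_nsmul_le_sum D _ _ (fun j hj => (hP j hj).2)
  have h2 := Nat.mul_le_mul_left (n - K.card) hsum
  have h3 := Nat.mul_le_mul_right ((m - K.card) * n + 1) hDn
  have h4 := (h3.trans h1).trans h2
  have := Nat.le_of_mul_le_mul_left h4 (by omega)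
  omega
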